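/- arXiv:1909.02929 — 2 statements merged into one kernel-verified Lean document; each statement's English description precedes it below -/
import Mathlib

section
/- For every λ > 0, r > 0, α > 1 and y ∈ ℕ, with γ = (α−1)/r, the BNB score s(y, λ) = γλ·(ψ(γλ+y) + ψ(γλ+α) − ψ(γλ+y+α+r) − ψ(γλ)) satisfies −(r+α+1) ≤ s(y, λ) ≤ α+1; in particular |s(y, λ)| ≤ α+r+1. -/
noncomputable def digamma (x : ℝ) : ℝ := deriv (fun t => Real.log (Real.Gamma t)) x

noncomputable def bnbScore (r a lam y : ℝ) : ℝ :=
  ((a - 1) / r) * lam *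
    (digamma (((a - 1) / r) * lam + y) + digamma (((a - 1) / r) * lam + a) -
      digamma (((a - 1) / r) * lam + y + a + r) - digamma (((a - 1) / r) * lam))

open Set

/-- `log Γ` is differentiable at every positive real. -/
lemma differentiableAt_log_Gamma {x : ℝ} (hx : 0 < x) :
    DifferentiableAt ℝ (fun t => Real.log (Real.Gamma t)) x := by
  refine (Real.differentiableAt_Gamma fun m => ?_).log (Real.Gamma_pos_of_pos hx).ne'
  have : (0 : ℝ) ≤ m := m.cast_nonneg
  linarith

/-- The digamma function is monotone on the positive reals, by log-convexity of `Γ`. -/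
lemma monotoneOn_digamma : MonotoneOn digamma (Ioi 0) :=
  Real.convexOn_log_Gamma.monotoneOn_deriv fun _ hx => differentiableAt_log_Gamma hx

lemma digamma_add_one {x : ℝ} (hx : 0 < x) : digamma (x + 1) = digamma x + x⁻¹ := by
  have h : (fun t => Real.log (Real.Gamma (t + 1))) =ᶠ[nhds x]
      fun t => Real.log (Real.Gamma t) + Real.log t := by
    filter_upwards [Ioi_mem_nhds hx] with t ht
    rw [Real.Gamma_add_one (ne_of_gt ht),
      Real.log_mul (ne_of_gt ht) (Real.Gamma_pos_of_pos ht).ne', add_comm]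
  unfold digamma
  rw [← deriv_comp_add_const (fun t => Real.log (Real.Gamma t)) 1 x, h.deriv_eq,
    deriv_fun_add (differentiableAt_log_Gamma hx) (Real.differentiableAt_log hx.ne'),
    Real.deriv_log]

lemma digamma_add_natCast_le {x : ℝ} (hx : 0 < x) (n : ℕ) :
    digamma (x + n) ≤ digamma x + n / x := by
  induction n with
  | zero => simp
  | succ k ih =>
    have hk : (0 : ℝ) ≤ k := k.cast_nonneg
    have hinv : (x + k)⁻¹ ≤ x⁻¹ := inv_anti₀ hx (by linarith)
    push_cast
    rw [← add_assoc, digamma_add_one (by linarith), add_div, one_div]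
    linarith

lemma mul_digamma_add_sub_le {x c : ℝ} (hx : 0 < x) (hc : 0 ≤ c) :
    x * (digamma (x + c) - digamma x) ≤ c + 1 := by
  have hceil : c ≤ ⌈c⌉₊ := Nat.le_ceil c
  have hmono : digamma (x + c) ≤ digamma (x + ⌈c⌉₊) :=
    monotoneOn_digamma (mem_Ioi.2 (by linarith)) (mem_Ioi.2 (by linarith)) (by linarith)
  have hle := digamma_add_natCast_le hx ⌈c⌉₊
  calc x * (digamma (x + c) - digamma x) ≤ x * (⌈c⌉₊ / x) := by gcongr; linarith
    _ = ⌈c⌉₊ := by field_simp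
    _ ≤ c + 1 := (Nat.ceil_lt_add_one hc).le

theorem bnb_score_bounds (lam r a : ℝ) (hlam : 0 < lam) (hr : 0 < r) (ha : 1 < a) (y : ℕ) :
    (-(r + a + 1) ≤ bnbScore r a lam (y : ℝ) ∧ bnbScore r a lam (y : ℝ) ≤ a + 1) ∧
      |bnbScore r a lam (y : ℝ)| ≤ a + r + 1 := by
  unfold bnbScore
  have hx : 0 < (a - 1) / r * lam := mul_pos (div_pos (by linarith) hr) hlam
  generalize (a - 1) / r * lam = x at hx ⊢
  have hy : (0 : ℝ) ≤ y := y.cast_nonneg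
  have hz : 0 < x + y := by linarith
  have hxa : 0 ≤ digamma (x + a) - digamma x :=
    sub_nonneg.2 (monotoneOn_digamma hx (mem_Ioi.2 (by linarith)) (by linarith))
  have hzc : 0 ≤ digamma (x + y + a + r) - digamma (x + y) :=
    sub_nonneg.2 (monotoneOn_digamma hz (mem_Ioi.2 (by linarith)) (by linarith))
  have hupper := mul_digamma_add_sub_le hx (c := a) (by linarith)
  have hlower := mul_digamma_add_sub_le hz (c := a + r) (by linarith)
  rw [← add_assoc] at hlower
  have hscale : x * (digamma (x + y + a + r) - digamma (x + y)) ≤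
      (x + y) * (digamma (x + y + a + r) - digamma (x + y)) := by
    gcongr
    linarith
  have hxa' := mul_nonneg hx.le hxa
  have hzc' := mul_nonneg hx.le hzc
  refine ⟨⟨by linarith, by linarith⟩, abs_le.2 ⟨by linarith, by linarith⟩⟩
end

section
/- Let r > 0, α > 1 and λ₁ ≥ λ₂ > 0. Then the beta negative binomial pmfs are ordered in the likelihood ratio order: for all y₁, y₂ ∈ ℕ with y₁ ≥ y₂, p(y₁; λ₁, r, α)·p(y₂; λ₂, r, α) ≥ p(y₂; λ₁, r, α)·p(y₁; λ₂, r, α). -/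
noncomputable def betaFn (a b : ℝ) : ℝ := Real.Gamma a * Real.Gamma b / Real.Gamma (a + b)

noncomputable def bnbPmf (lam r a : ℝ) (y : ℕ) : ℝ :=
  Real.Gamma ((y : ℝ) + r) / (Real.Gamma ((y : ℝ) + 1) * Real.Gamma r) *
    (betaFn (a + r) ((a - 1) * lam / r + (y : ℝ)) / betaFn a ((a - 1) * lam / r))

theorem betaFn_pos {a b : ℝ} (ha : 0 < a) (hb : 0 < b) : 0 < betaFn a b :=
  div_pos (mul_pos (Real.Gamma_pos_of_pos ha) (Real.Gamma_pos_of_pos hb))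
    (Real.Gamma_pos_of_pos (add_pos ha hb))

theorem betaFn_add_one_right {a b : ℝ} (ha : 0 < a) (hb : 0 < b) :
    betaFn a (b + 1) = b / (a + b) * betaFn a b := by
  have hab : 0 < a + b := add_pos ha hb
  have hG := (Real.Gamma_pos_of_pos hab).ne'
  unfold betaFn
  rw [← add_assoc, Real.Gamma_add_one hb.ne', Real.Gamma_add_one hab.ne']
  field_simp

theorem bnbPmf_pos {lam r a : ℝ} (hr : 0 < r) (ha : 1 < a) (hlam : 0 < lam) (y : ℕ) :
    0 < bnbPmf lam r a y := by
  have hb : 0 < (a - 1) * lam / r := div_pos (mul_pos (sub_pos.2 ha) hlam) hr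
  have hyr := Real.Gamma_pos_of_pos (show 0 < (y : ℝ) + r by positivity)
  have hy := Real.Gamma_pos_of_pos (show 0 < (y : ℝ) + 1 by positivity)
  have hGr := Real.Gamma_pos_of_pos hr
  have hnum := betaFn_pos (show 0 < a + r by linarith)
    (show 0 < (a - 1) * lam / r + (y : ℝ) by positivity)
  have hden := betaFn_pos (show 0 < a by linarith) hb
  unfold bnbPmf
  positivity

/-- The ratio of consecutive values of the beta negative binomial pmf. -/
theorem bnbPmf_succ {lam r a : ℝ} (hr : 0 < r) (ha : 1 < a) (hlam : 0 < lam) (y : ℕ) :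
    bnbPmf lam r a (y + 1) =
      ((y : ℝ) + r) / ((y : ℝ) + 1) *
        (((a - 1) * lam / r + y) / (a + r + ((a - 1) * lam / r + y))) * bnbPmf lam r a y := by
  have hb : 0 < (a - 1) * lam / r := div_pos (mul_pos (sub_pos.2 ha) hlam) hr
  have hyr : (y : ℝ) + r ≠ 0 := by positivity
  have hy : (y : ℝ) + 1 ≠ 0 := by positivity
  unfold bnbPmf
  push_cast
  rw [show (y : ℝ) + 1 + r = (y + r) + 1 by ring, ← add_assoc ((a - 1) * lam / r),
    betaFn_add_one_right (show 0 < a + r by linarith)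
      (show 0 < (a - 1) * lam / r + (y : ℝ) by positivity),
    Real.Gamma_add_one hyr, Real.Gamma_add_one hy, mul_assoc ((y : ℝ) + 1), mul_div_mul_comm]
  ring

theorem bnb_likelihood_ratio_order (r a lam1 lam2 : ℝ) (hr : 0 < r) (ha : 1 < a)
    (h2 : 0 < lam2) (h12 : lam2 ≤ lam1) (y1 y2 : ℕ) (hy : y2 ≤ y1) :
    bnbPmf lam1 r a y2 * bnbPmf lam2 r a y1 ≤ bnbPmf lam1 r a y1 * bnbPmf lam2 r a y2 := by
  have h1 : 0 < lam1 := h2.trans_le h12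
  have ha' : 0 < a - 1 := sub_pos.2 ha
  induction y1, hy using Nat.le_induction with
  | base => exact le_rfl
  | succ n _ ih =>
    rw [bnbPmf_succ hr ha h1, bnbPmf_succ hr ha h2]
    set b1 := (a - 1) * lam1 / r + n with hb1
    set b2 := (a - 1) * lam2 / r + n with hb2
    have hb2_pos : 0 < b2 := by positivity
    have hb : b2 ≤ b1 := by rw [hb1, hb2]; gcongr
    have hb1_pos : 0 < b1 := hb2_pos.trans_le hb
    have har : 0 < a + r := by linarith
    have hratio : b2 / (a + r + b2) ≤ b1 / (a + r + b1) := by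
      rw [div_le_div_iff₀ (by positivity) (by positivity)]
      nlinarith
    have hp1 := bnbPmf_pos hr ha h1
    have hp2 := bnbPmf_pos hr ha h2
    calc bnbPmf lam1 r a y2 * (((n : ℝ) + r) / (n + 1) * (b2 / (a + r + b2)) * bnbPmf lam2 r a n)
        = ((n : ℝ) + r) / (n + 1) * (b2 / (a + r + b2)) *
            (bnbPmf lam1 r a y2 * bnbPmf lam2 r a n) := by ring
      _ ≤ ((n : ℝ) + r) / (n + 1) * (b1 / (a + r + b1)) *
            (bnbPmf lam1 r a n * bnbPmf lam2 r a y2) := by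
          have := (mul_pos (hp1 y2) (hp2 n)).le
          gcongr
      _ = _ := by ring
end
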